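/- Let d = 1 and assume the walk is not simple, i.e., a(z) > 0 for some integer z with |z| ≥ 2. Then for all x ∈ ℤ and y ∈ ℤ with y ≠ 0, the constant C_1(x, y) := (ρ_1(y-x) + ρ_1(x) - ρ_1(y)) / (4aπγ_1) + aπ y² γ_1³ (ρ_1(y-x) - ρ_1(x) - ρ_1(y)) / ρ_1(y)² + 2aπ x y γ_1³ / ρ_1(y) is strictly positive. -/

import Mathlib

open MeasureTheory Real Filter Topology Asymptotics

/-- Fourier symbol `φ(θ) = ∑_z a(z) cos(zθ)` of the random walk on `ℤ`. -/
noncomputable def phi1 (a : ℤ → ℝ) (θ : ℝ) : ℝ :=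
  ∑' z : ℤ, a z * Real.cos ((z : ℝ) * θ)

/-- Transition probability `p(t;x,y) = (2π)⁻¹ ∫_{-π}^{π} e^{φ(θ)t} cos(θ(y-x)) dθ`. -/
noncomputable def p1 (a : ℤ → ℝ) (t : ℝ) (x y : ℤ) : ℝ :=
  (2 * π)⁻¹ * ∫ θ in (-π)..π, Real.exp (phi1 a θ * t) * Real.cos (θ * ((y : ℝ) - (x : ℝ)))

/-- Laplace transform `G_λ(x,y) = ∫_0^∞ e^{-λt} p(t;x,y) dt`. -/
noncomputable def G1 (a : ℤ → ℝ) (lam : ℝ) (x y : ℤ) : ℝ :=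
  ∫ t in Set.Ioi (0 : ℝ), Real.exp (-lam * t) * p1 a t x y

/-- `φ''(0) = -∑_z a(z) z²`. -/
noncomputable def phi1'' (a : ℤ → ℝ) : ℝ := -∑' z : ℤ, a z * (z : ℝ) ^ 2

/-- `γ₁ = 1/√(2π |φ''(0)|)`. -/
noncomputable def gam1 (a : ℤ → ℝ) : ℝ := 1 / Real.sqrt (2 * π * |phi1'' a|)

/-- `ρ₁(r) = (a/(2π)) ∫_{-π}^{π} (cos(rθ) - 1)/φ(θ) dθ` for `r ≠ 0`, and `ρ₁(0) = 1`. -/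
noncomputable def rho1 (a : ℤ → ℝ) (r : ℤ) : ℝ :=
  if r = 0 then 1 else
    (-(a 0) / (2 * π)) * ∫ θ in (-π)..π, (Real.cos ((r : ℝ) * θ) - 1) / phi1 a θ

/-- `γ̃₁(r) = (r²/(4π)) ∫_ℝ v² e^{φ''(0)v²/2} dv`. -/
noncomputable def gamTilde1 (a : ℤ → ℝ) (r : ℤ) : ℝ :=
  ((r : ℝ) ^ 2 / (4 * π)) * ∫ v : ℝ, v ^ 2 * Real.exp (phi1'' a * v ^ 2 / 2)

/-- The constant `C₁(x,y)` from Theorem 1 of the paper (with `a = -a(0)`). -/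
noncomputable def C1Const (a : ℤ → ℝ) (x y : ℤ) : ℝ :=
  (rho1 a (y - x) + rho1 a x - rho1 a y) / (4 * (-(a 0)) * π * gam1 a) +
    (-(a 0)) * π * (y : ℝ) ^ 2 * gam1 a ^ 3 *
      (rho1 a (y - x) - rho1 a x - rho1 a y) / (rho1 a y) ^ 2 +
    2 * (-(a 0)) * π * (x : ℝ) * (y : ℝ) * gam1 a ^ 3 / rho1 a y

lemma one_sub_cos_eq_two_mul_sin_sq (t : ℝ) : 1 - cos t = 2 * sin (t / 2) ^ 2 := by
  have h : cos t = cos (2 * (t / 2)) := by ring_nf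
  rw [h, cos_two_mul, cos_sq']
  ring

lemma abs_sin_natCast_mul_le (n : ℕ) (x : ℝ) : |sin (n * x)| ≤ n * |sin x| := by
  induction n with
  | zero => simp
  | succ n ih =>
    have h : ((n + 1 : ℕ) : ℝ) * x = n * x + x := by push_cast; ring
    rw [h, sin_add]
    refine (abs_add_le _ _).trans ?_
    rw [abs_mul, abs_mul]
    push_cast
    nlinarith [abs_cos_le_one x, abs_cos_le_one (n * x), abs_nonneg (sin x),
      abs_nonneg (sin (n * x))]

lemma abs_sin_natCast_mul_lt {n : ℕ} (hn : 2 ≤ n) {x : ℝ} (hx : sin x ≠ 0) :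
    |sin (n * x)| < n * |sin x| := by
  obtain ⟨m, rfl⟩ : ∃ m, n = m + 1 := ⟨n - 1, by omega⟩
  have hm : (1 : ℝ) ≤ m := by exact_mod_cast (by omega : 1 ≤ m)
  have hs : 0 < |sin x| := abs_pos.2 hx
  have hc : |cos x| < 1 := by
    rw [← sq_lt_one_iff_abs_lt_one]
    nlinarith [sin_sq_add_cos_sq x, sq_pos_of_ne_zero hx]
  have h : ((m + 1 : ℕ) : ℝ) * x = m * x + x := by push_cast; ring
  rw [h, sin_add]
  refine (abs_add_le _ _).trans_lt ?_
  rw [abs_mul, abs_mul]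
  push_cast
  have h1 : |sin (m * x)| * |cos x| ≤ m * |sin x| * |cos x| :=
    mul_le_mul_of_nonneg_right (abs_sin_natCast_mul_le m x) (abs_nonneg _)
  have h2 : m * |sin x| * |cos x| < m * |sin x| * 1 := by gcongr
  have h3 : |cos (m * x)| * |sin x| ≤ 1 * |sin x| := by
    gcongr
    exact abs_cos_le_one _
  linarith

lemma cos_intCast_mul (n : ℤ) (θ : ℝ) : cos ((n : ℝ) * θ) = cos ((n.natAbs : ℝ) * θ) := by
  obtain ⟨k, rfl | rfl⟩ := n.eq_nat_or_neg <;> simp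

lemma one_sub_cos_intCast_mul_le (n : ℤ) (θ : ℝ) :
    1 - cos (n * θ) ≤ (n : ℝ) ^ 2 * (1 - cos θ) := by
  have h := abs_sin_natCast_mul_le n.natAbs (θ / 2)
  have h2 : ((n.natAbs : ℕ) : ℝ) ^ 2 = (n : ℝ) ^ 2 := by
    rw [Nat.cast_natAbs, Int.cast_abs, sq_abs]
  rw [cos_intCast_mul, one_sub_cos_eq_two_mul_sin_sq, one_sub_cos_eq_two_mul_sin_sq θ, ← h2,
    mul_div_assoc]
  have h3 := pow_le_pow_left₀ (abs_nonneg _) h 2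
  rw [mul_pow, sq_abs, sq_abs] at h3
  linarith

lemma one_sub_cos_intCast_mul_lt {n : ℤ} (hn : 2 ≤ |n|) {θ : ℝ} (hθ : cos θ < 1) :
    1 - cos (n * θ) < (n : ℝ) ^ 2 * (1 - cos θ) := by
  have hs : sin (θ / 2) ≠ 0 := by
    intro h
    have := one_sub_cos_eq_two_mul_sin_sq θ
    rw [h] at this
    norm_num at this
    linarith
  have h := abs_sin_natCast_mul_lt (n := n.natAbs) (by rw [Int.abs_eq_natAbs] at hn; omega) hs
  have h2 : ((n.natAbs : ℕ) : ℝ) ^ 2 = (n : ℝ) ^ 2 := by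
    rw [Nat.cast_natAbs, Int.cast_abs, sq_abs]
  rw [cos_intCast_mul, one_sub_cos_eq_two_mul_sin_sq, one_sub_cos_eq_two_mul_sin_sq θ, ← h2,
    mul_div_assoc]
  have h3 := pow_lt_pow_left₀ h (abs_nonneg _) two_ne_zero
  rw [mul_pow, sq_abs, sq_abs] at h3
  linarith

lemma one_sub_cos_add_le (u v : ℝ) :
    1 - cos (u + v) ≤ 2 * (1 - cos u) + 2 * (1 - cos v) := by
  rw [cos_add]
  nlinarith [sq_nonneg (cos u + cos v - 2), sq_nonneg (sin u - sin v), sin_sq_add_cos_sq u,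
    sin_sq_add_cos_sq v]

lemma cos_lt_one_of_abs_lt {x : ℝ} (h0 : x ≠ 0) (h1 : |x| < 2 * π) : cos x < 1 :=
  (cos_le_one x).lt_of_ne fun h =>
    h0 ((cos_eq_one_iff_of_lt_of_lt (abs_lt.1 h1).1 (abs_lt.1 h1).2).1 h)

lemma ae_cos_lt_one : ∀ᵐ θ : ℝ, θ ∈ Set.uIoc (-π) π → cos θ < 1 := by
  filter_upwards [Measure.ae_ne volume (0 : ℝ)] with θ h0 hθ
  rw [Set.uIoc_of_le (by linarith [pi_pos]), Set.mem_Ioc] at hθ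
  exact cos_lt_one_of_abs_lt h0 (abs_lt.2 ⟨by linarith [pi_pos], by linarith [pi_pos]⟩)

lemma intervalIntegrable_of_measurable_of_abs_le {f : ℝ → ℝ} (hf : Measurable f) {C : ℝ}
    (hC : ∀ x, |f x| ≤ C) (u v : ℝ) : IntervalIntegrable f volume u v := by
  refine (intervalIntegrable_const (c := C)).mono_fun hf.aestronglyMeasurable ?_
  exact .of_forall fun x => (hC x).trans (le_abs_self C)

lemma integral_cos_intCast_mul {n : ℤ} (hn : n ≠ 0) : ∫ θ in (-π)..π, cos (n * θ) = 0 := by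
  have h : (n : ℝ) ≠ 0 := by exact_mod_cast hn
  rw [intervalIntegral.integral_comp_mul_left (fun x => cos x) h, integral_cos, mul_neg, sin_neg,
    sin_int_mul_pi]
  simp

lemma intervalIntegrable_one_sub_cos_div (n : ℤ) :
    IntervalIntegrable (fun θ => (1 - cos (n * θ)) / (1 - cos θ)) volume (-π) π := by
  refine intervalIntegrable_of_measurable_of_abs_le (by fun_prop) (C := (n : ℝ) ^ 2)
    (fun θ => ?_) _ _
  have h0 : 0 ≤ 1 - cos θ := by linarith [cos_le_one θ]
  have h1 : 0 ≤ 1 - cos (n * θ) := by linarith [cos_le_one (n * θ)]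
  rw [abs_of_nonneg (div_nonneg h1 h0)]
  exact div_le_of_le_mul₀ h0 (by positivity) (one_sub_cos_intCast_mul_le n θ)

lemma integral_one_sub_cos_div_natCast (n : ℕ) :
    ∫ θ in (-π)..π, (1 - cos (n * θ)) / (1 - cos θ) = 2 * π * n := by
  have hint : ∀ m : ℕ, IntervalIntegrable (fun θ => (1 - cos (m * θ)) / (1 - cos θ))
      volume (-π) π := fun m => intervalIntegrable_one_sub_cos_div m
  induction n using Nat.twoStepInduction with
  | zero => simp
  | one =>
    rw [intervalIntegral.integral_congr_ae (g := fun _ => (1 : ℝ))]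
    · simp; ring
    · filter_upwards [ae_cos_lt_one] with θ h hθ
      have := h hθ
      simp only [Nat.cast_one, one_mul]
      exact div_self (by linarith)
  | more n ih1 ih2 =>
    have key : ∫ θ in (-π)..π, ((1 - cos ((n + 2 : ℕ) * θ)) / (1 - cos θ)) =
        ∫ θ in (-π)..π, (2 * ((1 - cos ((n + 1 : ℕ) * θ)) / (1 - cos θ))
          - (1 - cos (n * θ)) / (1 - cos θ) + 2 * cos (((n + 1 : ℕ) : ℤ) * θ)) := by
      refine intervalIntegral.integral_congr_ae ?_
      filter_upwards [ae_cos_lt_one] with θ h hθ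
      have h1 : 1 - cos θ ≠ 0 := by linarith [h hθ]
      have e1 : ((n + 2 : ℕ) : ℝ) * θ = (n + 1) * θ + θ := by push_cast; ring
      have e2 : (n : ℝ) * θ = (n + 1) * θ - θ := by ring
      rw [e1, e2]
      push_cast
      rw [cos_add, cos_sub]
      field_simp
      ring
    rw [key, intervalIntegral.integral_add (((hint _).const_mul 2).sub (hint _))
      (Continuous.intervalIntegrable (by fun_prop) _ _),
      intervalIntegral.integral_sub ((hint _).const_mul 2) (hint _),
      intervalIntegral.integral_const_mul, intervalIntegral.integral_const_mul, ih1, ih2,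
      integral_cos_intCast_mul (by positivity)]
    push_cast
    ring

lemma integral_one_sub_cos_div (n : ℤ) :
    ∫ θ in (-π)..π, (1 - cos (n * θ)) / (1 - cos θ) = 2 * π * |(n : ℝ)| := by
  simp_rw [cos_intCast_mul n]
  rw [integral_one_sub_cos_div_natCast, Nat.cast_natAbs, Int.cast_abs]

lemma hasSum_zero_of_odd {f : ℤ → ℝ} (hf : Summable f) (hodd : ∀ z, f (-z) = -f z) :
    HasSum f 0 := by
  have h1 : ∑' z, f z = ∑' z, f (-z) := ((Equiv.neg ℤ).tsum_eq f).symm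
  simp_rw [hodd, tsum_neg] at h1
  have h2 : ∑' z, f z = 0 := by linarith
  exact h2 ▸ hf.hasSum

/-- Minimum principle: a function on `ℤ` that tends to infinity, vanishes at two points, and is
harmonic elsewhere for a walk with jumps of size at least `2`, is positive elsewhere. -/
lemma pos_of_harmonic_of_tendsto_atTop {a F : ℤ → ℝ} (hpos : ∀ z : ℤ, z ≠ 0 → 0 ≤ a z)
    (hsymm : ∀ z : ℤ, a (-z) = a z) (hirr : AddSubgroup.closure {z : ℤ | 0 < a z} = ⊤)
    (h0 : a 0 < 0) (hns : ∃ z : ℤ, 2 ≤ |z| ∧ 0 < a z) {p q : ℤ} (hF : Tendsto F cofinite atTop)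
    (hp : F p = 0) (hq : F q = 0)
    (hharm : ∀ x, x ≠ p → x ≠ q → HasSum (fun z => a z * (F (x + z) - F x)) 0)
    {x : ℤ} (hxp : x ≠ p) (hxq : x ≠ q) : 0 < F x := by
  by_contra! hx
  obtain ⟨m, hm⟩ := hF.exists_forall_le
  set Z : Set ℤ := {u | F u = F m} with hZ
  have hfin : Z.Finite := by
    refine (hF.eventually (eventually_gt_atTop (F m))).subset fun u hu => ?_
    simp only [Set.mem_compl_iff, Set.mem_ofPred_eq]
    exact fun h => h.ne' hu
  have hmZ : m ∈ Z := rfl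
  obtain ⟨s, hs2, hs⟩ : ∃ s : ℤ, 2 ≤ s ∧ 0 < a s := by
    obtain ⟨z, hz, hz'⟩ := hns
    rcases abs_choice z with h | h
    · exact ⟨z, h ▸ hz, hz'⟩
    · exact ⟨-z, h ▸ hz, (hsymm z).symm ▸ hz'⟩
  have hstep : ∀ u ∈ Z, u ≠ p → u ≠ q → ∀ z, 0 < a z → u + z ∈ Z := by
    intro u hu hup huq z hz
    have hnn : ∀ z, 0 ≤ a z * (F (u + z) - F u) := by
      intro z
      by_cases h : z = 0
      · simp [h]
      · exact mul_nonneg (hpos z h) (by rw [show F u = F m from hu]; linarith [hm (u + z)])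
    have h := congrFun ((hasSum_zero_iff_of_nonneg hnn).1 (hharm u hup huq)) z
    rcases mul_eq_zero.1 h with h | h
    · exact absurd h hz.ne'
    · exact (sub_eq_zero.1 h).trans hu
  obtain ⟨M, hM, hMmax⟩ := Set.exists_max_image Z id hfin ⟨m, hmZ⟩
  obtain ⟨N, hN, hNmin⟩ := Set.exists_min_image Z id hfin ⟨m, hmZ⟩
  simp only [id] at hMmax hNmin
  have hM' : M = p ∨ M = q := by
    by_contra! h
    have := hMmax _ (hstep M hM h.1 h.2 s hs)
    omega
  have hN' : N = p ∨ N = q := by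
    by_contra! h
    have := hNmin _ (hstep N hN h.1 h.2 (-s) ((hsymm s).symm ▸ hs))
    omega
  have hm0 : F m = 0 := by
    rw [← show F M = F m from hM]
    rcases hM' with h | h <;> rwa [h]
  have hxZ : x ∈ Z := le_antisymm (hm0 ▸ hx) (hm x)
  have hxM := hMmax x hxZ
  have hxN := hNmin x hxZ
  obtain ⟨w, ⟨hwZ, hwN⟩, hwmin⟩ := Set.exists_min_image {u | u ∈ Z ∧ N < u} id
    (hfin.subset fun u hu => hu.1) ⟨x, hxZ, by omega⟩
  simp only [id] at hwmin
  have hwx := hwmin x ⟨hxZ, by omega⟩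
  have hjump : ∀ z, 0 < z → 0 < a z → z = w - N := by
    intro z hz haz
    have h1 := hstep w hwZ (by omega) (by omega) (-z) ((hsymm z).symm ▸ haz)
    have h2 := hNmin _ h1
    by_contra h3
    have h4 := hwmin _ ⟨h1, by omega⟩
    omega
  have hle : AddSubgroup.closure {z : ℤ | 0 < a z} ≤ AddSubgroup.zmultiples (w - N) := by
    rw [AddSubgroup.closure_le]
    intro z hz
    rw [SetLike.mem_coe, Int.mem_zmultiples_iff]
    rcases lt_trichotomy z 0 with h | h | h
    · rw [← dvd_neg, hjump (-z) (by omega) ((hsymm z).symm ▸ hz)]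
    · subst h
      exact absurd hz (not_lt.2 h0.le)
    · rw [hjump z h hz]
  rw [hirr] at hle
  have h1 : (1 : ℤ) ∈ AddSubgroup.zmultiples (w - N) := hle trivial
  rw [Int.mem_zmultiples_iff, ← hjump s (by omega) hs] at h1
  have := Int.le_of_dvd one_pos h1
  omega

/-- The potential kernel `(a/(2π)) ∫_{-π}^{π} (cos(rθ) - 1)/φ(θ) dθ`, with value `0` at `r = 0`. -/
noncomputable def potentialKernel (a : ℤ → ℝ) (r : ℤ) : ℝ :=
  (-(a 0) / (2 * π)) * ∫ θ in (-π)..π, (Real.cos ((r : ℝ) * θ) - 1) / phi1 a θ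

lemma potentialKernel_zero (a : ℤ → ℝ) : potentialKernel a 0 = 0 := by
  simp [potentialKernel]

lemma potentialKernel_neg (a : ℤ → ℝ) (r : ℤ) : potentialKernel a (-r) = potentialKernel a r := by
  simp [potentialKernel]

lemma rho1_zero (a : ℤ → ℝ) : rho1 a 0 = 1 := if_pos rfl

lemma rho1_of_ne_zero (a : ℤ → ℝ) {r : ℤ} (hr : r ≠ 0) : rho1 a r = potentialKernel a r :=
  if_neg hr

section Symbol

variable {a : ℤ → ℝ}

lemma abs_mul_cos_le (z : ℤ) (θ : ℝ) : ‖a z * cos (z * θ)‖ ≤ |a z| := by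
  rw [norm_mul, Real.norm_eq_abs, Real.norm_eq_abs]
  exact mul_le_of_le_one_right (abs_nonneg _) (abs_cos_le_one _)

lemma hasSum_mul_cos (ha : Summable a) (θ : ℝ) :
    HasSum (fun z : ℤ => a z * cos (z * θ)) (phi1 a θ) :=
  (Summable.of_norm_bounded ha.abs fun z => abs_mul_cos_le z θ).hasSum

lemma continuous_phi1 (ha : Summable a) : Continuous (phi1 a) :=
  continuous_tsum (fun z => by fun_prop) ha.abs fun z θ => abs_mul_cos_le z θ

lemma hasSum_mul_one_sub_cos (hsum : HasSum a 0) (θ : ℝ) :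
    HasSum (fun z : ℤ => a z * (1 - cos (z * θ))) (-phi1 a θ) := by
  simpa [mul_sub] using hsum.sub (hasSum_mul_cos hsum.summable θ)

lemma mul_one_sub_cos_nonneg (hpos : ∀ z : ℤ, z ≠ 0 → 0 ≤ a z) (z : ℤ) (θ : ℝ) :
    0 ≤ a z * (1 - cos (z * θ)) := by
  by_cases h : z = 0
  · simp [h]
  · exact mul_nonneg (hpos z h) (by linarith [cos_le_one (z * θ)])

lemma mul_one_sub_cos_le_neg_phi1 (hpos : ∀ z : ℤ, z ≠ 0 → 0 ≤ a z) (hsum : HasSum a 0) (z : ℤ)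
    (θ : ℝ) : a z * (1 - cos (z * θ)) ≤ -phi1 a θ :=
  le_hasSum (hasSum_mul_one_sub_cos hsum θ) z fun w _ => mul_one_sub_cos_nonneg hpos w θ

lemma neg_phi1_nonneg (hpos : ∀ z : ℤ, z ≠ 0 → 0 ≤ a z) (hsum : HasSum a 0) (θ : ℝ) :
    0 ≤ -phi1 a θ :=
  (hasSum_mul_one_sub_cos hsum θ).nonneg fun w => mul_one_sub_cos_nonneg hpos w θ

/-- Irreducibility makes the symbol comparable from below with `1 - cos θ`. -/
lemma exists_one_sub_cos_le_mul_neg_phi1 (hpos : ∀ z : ℤ, z ≠ 0 → 0 ≤ a z) (hsum : HasSum a 0)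
    (hirr : AddSubgroup.closure {z : ℤ | 0 < a z} = ⊤) :
    ∃ C : ℝ, 0 ≤ C ∧ ∀ θ, 1 - cos θ ≤ C * -phi1 a θ := by
  have h1 : (1 : ℤ) ∈ AddSubgroup.closure {z : ℤ | 0 < a z} := hirr ▸ trivial
  suffices h : ∀ r ∈ AddSubgroup.closure {z : ℤ | 0 < a z},
      ∃ C : ℝ, 0 ≤ C ∧ ∀ θ, 1 - cos (r * θ) ≤ C * -phi1 a θ by
    simpa using h 1 h1
  intro r hr
  induction hr using AddSubgroup.closure_induction with
  | mem z hz =>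
    have hz' : 0 < a z := hz
    refine ⟨(a z)⁻¹, by positivity, fun θ => ?_⟩
    rw [← div_eq_inv_mul, le_div_iff₀' hz']
    exact mul_one_sub_cos_le_neg_phi1 hpos hsum z θ
  | zero => exact ⟨0, le_rfl, by simp⟩
  | add u v _ _ hu hv =>
    obtain ⟨C, hC, hu⟩ := hu
    obtain ⟨D, hD, hv⟩ := hv
    refine ⟨2 * C + 2 * D, by positivity, fun θ => ?_⟩
    have h := one_sub_cos_add_le (u * θ) (v * θ)
    push_cast
    rw [add_mul]
    linarith [hu θ, hv θ]
  | neg u _ hu => simpa using hu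

lemma abs_cos_sub_one_div_phi1_le (hpos : ∀ z : ℤ, z ≠ 0 → 0 ≤ a z) (hsum : HasSum a 0) {C : ℝ}
    (hC0 : 0 ≤ C) (hC : ∀ θ, 1 - cos θ ≤ C * -phi1 a θ) (r : ℤ) (θ : ℝ) :
    |(cos (r * θ) - 1) / phi1 a θ| ≤ C * (r : ℝ) ^ 2 := by
  have h0 := neg_phi1_nonneg hpos hsum θ
  have h1 : 0 ≤ 1 - cos (r * θ) := by linarith [cos_le_one (r * θ)]
  rw [← neg_div_neg_eq, neg_sub, abs_of_nonneg (div_nonneg h1 h0)]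
  refine div_le_of_le_mul₀ h0 (by positivity) ((one_sub_cos_intCast_mul_le r θ).trans ?_)
  rw [mul_comm C, mul_assoc]
  exact mul_le_mul_of_nonneg_left (hC θ) (sq_nonneg _)

lemma intervalIntegrable_cos_sub_one_div_phi1 (hpos : ∀ z : ℤ, z ≠ 0 → 0 ≤ a z)
    (hsum : HasSum a 0) (hirr : AddSubgroup.closure {z : ℤ | 0 < a z} = ⊤) (r : ℤ) :
    IntervalIntegrable (fun θ => (cos (r * θ) - 1) / phi1 a θ) volume (-π) π := by
  obtain ⟨C, hC0, hC⟩ := exists_one_sub_cos_le_mul_neg_phi1 hpos hsum hirr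
  have := (continuous_phi1 hsum.summable).measurable
  exact intervalIntegrable_of_measurable_of_abs_le (by fun_prop)
    (abs_cos_sub_one_div_phi1_le hpos hsum hC0 hC r) _ _

lemma summable_intCast_mul (hpos : ∀ z : ℤ, z ≠ 0 → 0 ≤ a z)
    (hvar : Summable fun z : ℤ => (z : ℝ) ^ 2 * a z) : Summable fun z : ℤ => a z * (z : ℝ) := by
  refine Summable.of_norm_bounded hvar fun z => ?_
  by_cases h : z = 0
  · simp [h]
  · have h1 : |(z : ℝ)| ≤ (z : ℝ) ^ 2 := by
      rw [← sq_abs]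
      have : (1 : ℝ) ≤ |(z : ℝ)| := by exact_mod_cast Int.one_le_abs h
      nlinarith
    rw [norm_mul, Real.norm_eq_abs, Real.norm_eq_abs, abs_of_nonneg (hpos z h), mul_comm]
    exact mul_le_mul_of_nonneg_right h1 (hpos z h)

lemma hasSum_mul_cos_add (hsymm : ∀ z : ℤ, a (-z) = a z) (ha : Summable a) (x : ℤ) (θ : ℝ) :
    HasSum (fun z : ℤ => a z * cos ((x + z : ℤ) * θ)) (cos (x * θ) * phi1 a θ) := by
  have hsin : HasSum (fun z : ℤ => a z * sin (z * θ)) 0 := by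
    refine hasSum_zero_of_odd (Summable.of_norm_bounded ha.abs fun z => ?_)
      fun z => by simp [hsymm]
    rw [norm_mul, Real.norm_eq_abs, Real.norm_eq_abs]
    exact mul_le_of_le_one_right (abs_nonneg _) (abs_sin_le_one _)
  have h := ((hasSum_mul_cos ha θ).mul_left (cos (x * θ))).sub (hsin.mul_left (sin (x * θ)))
  rw [mul_zero, sub_zero] at h
  refine h.congr_fun fun z => ?_
  push_cast
  rw [add_mul, cos_add]
  ring

/-- The potential kernel is harmonic off the origin. -/
lemma hasSum_mul_potentialKernel_add (hpos : ∀ z : ℤ, z ≠ 0 → 0 ≤ a z)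
    (hsymm : ∀ z : ℤ, a (-z) = a z) (hsum : HasSum a 0)
    (hvar : Summable fun z : ℤ => (z : ℝ) ^ 2 * a z)
    (hirr : AddSubgroup.closure {z : ℤ | 0 < a z} = ⊤) {x : ℤ} (hx : x ≠ 0) :
    HasSum (fun z => a z * potentialKernel a (x + z)) 0 := by
  obtain ⟨C, hC0, hC⟩ := exists_one_sub_cos_le_mul_neg_phi1 hpos hsum hirr
  have hmeas := (continuous_phi1 hsum.summable).measurable
  have key : HasSum (fun z : ℤ => ∫ θ in (-π)..π, a z * ((cos ((x + z : ℤ) * θ) - 1) / phi1 a θ))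
      (∫ θ in (-π)..π, cos (x * θ)) := by
    refine intervalIntegral.hasSum_integral_of_dominated_convergence
      (fun z _ => |a z| * (C * ((x + z : ℤ) : ℝ) ^ 2)) (fun z => ?_) (fun z => ?_) ?_ ?_ ?_
    · exact Measurable.aestronglyMeasurable (by fun_prop)
    · refine .of_forall fun θ _ => ?_
      rw [norm_mul, Real.norm_eq_abs, Real.norm_eq_abs]
      exact mul_le_mul_of_nonneg_left (abs_cos_sub_one_div_phi1_le hpos hsum hC0 hC _ θ)
        (abs_nonneg _)
    · refine .of_forall fun θ _ => ?_
      have h := (((hsum.summable.mul_left (C * (x : ℝ) ^ 2)).add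
        ((summable_intCast_mul hpos hvar).mul_left (C * (2 * x)))).add (hvar.mul_left C)).abs
      refine h.congr fun z => ?_
      have : 0 ≤ C * ((x + z : ℤ) : ℝ) ^ 2 := by positivity
      rw [← abs_of_nonneg this, ← abs_mul]
      push_cast
      congr 1
      ring
    · exact intervalIntegrable_const
    · filter_upwards [ae_cos_lt_one] with θ hlt hθ
      have hcos := hlt hθ
      have hphi : phi1 a θ ≠ 0 := by
        intro h
        have := hC θ
        rw [h] at this
        linarith
      have h := ((hasSum_mul_cos_add hsymm hsum.summable x θ).sub hsum).div_const (phi1 a θ)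
      rw [sub_zero, mul_div_cancel_right₀ _ hphi] at h
      exact h.congr_fun fun z => by ring
  rw [integral_cos_intCast_mul hx] at key
  have h := key.mul_left (-(a 0) / (2 * π))
  rw [mul_zero] at h
  refine h.congr_fun fun z => ?_
  rw [potentialKernel, intervalIntegral.integral_const_mul]
  ring

lemma neg_phi1_lt (hpos : ∀ z : ℤ, z ≠ 0 → 0 ≤ a z) (hsum : HasSum a 0)
    (hvar : Summable fun z : ℤ => (z : ℝ) ^ 2 * a z) (hns : ∃ z : ℤ, 2 ≤ |z| ∧ 0 < a z) {θ : ℝ}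
    (hθ : cos θ < 1) : -phi1 a θ < -phi1'' a * (1 - cos θ) := by
  obtain ⟨w, hw, haw⟩ := hns
  have h2 : HasSum (fun z : ℤ => (a z * (z : ℝ) ^ 2) * (1 - cos θ))
      (-phi1'' a * (1 - cos θ)) := by
    rw [phi1'', neg_neg]
    simp_rw [mul_comm (_ ^ 2)] at hvar
    exact hvar.hasSum.mul_right _
  refine hasSum_lt (i := w) (fun z => ?_) ?_ (hasSum_mul_one_sub_cos hsum θ) h2
  · by_cases h : z = 0
    · simp [h]
    · rw [mul_assoc]
      exact mul_le_mul_of_nonneg_left (one_sub_cos_intCast_mul_le z θ) (hpos z h)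
  · change a w * _ < a w * _ * _
    rw [mul_assoc]
    exact mul_lt_mul_of_pos_left (one_sub_cos_intCast_mul_lt hw hθ) haw

lemma neg_phi1''_pos (hpos : ∀ z : ℤ, z ≠ 0 → 0 ≤ a z)
    (hvar : Summable fun z : ℤ => (z : ℝ) ^ 2 * a z) (hns : ∃ z : ℤ, 2 ≤ |z| ∧ 0 < a z) :
    0 < -phi1'' a := by
  obtain ⟨w, hw, haw⟩ := hns
  have hw0 : (w : ℝ) ≠ 0 := by
    rw [Int.cast_ne_zero]
    rintro rfl
    simp at hw
  rw [phi1'', neg_neg]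
  simp_rw [mul_comm (_ ^ 2)] at hvar
  refine hvar.tsum_pos (fun z => ?_) w (by positivity)
  by_cases h : z = 0
  · simp [h]
  · exact mul_nonneg (hpos z h) (sq_nonneg _)

/-- The potential kernel lies strictly above its linear asymptote through the origin. -/
lemma mul_abs_lt_potentialKernel (hpos : ∀ z : ℤ, z ≠ 0 → 0 ≤ a z) (hneg : a 0 < 0)
    (hsum : HasSum a 0) (hvar : Summable fun z : ℤ => (z : ℝ) ^ 2 * a z)
    (hirr : AddSubgroup.closure {z : ℤ | 0 < a z} = ⊤) (hns : ∃ z : ℤ, 2 ≤ |z| ∧ 0 < a z)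
    {r : ℤ} (hr : r ≠ 0) : -(a 0) / -phi1'' a * |(r : ℝ)| < potentialKernel a r := by
  obtain ⟨C, hC0, hC⟩ := exists_one_sub_cos_le_mul_neg_phi1 hpos hsum hirr
  have hs := neg_phi1''_pos hpos hvar hns
  have hlt : ∀ θ, cos θ < 1 → cos (r * θ) < 1 →
      (1 - cos (r * θ)) / (1 - cos θ) * (-phi1'' a)⁻¹ < (cos (r * θ) - 1) / phi1 a θ := by
    intro θ h1 h2
    have hphi : 0 < -phi1 a θ := by
      refine (neg_phi1_nonneg hpos hsum θ).lt_of_ne fun h => ?_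
      have := hC θ
      rw [← h] at this
      linarith
    rw [← neg_div_neg_eq (cos (r * θ) - 1), neg_sub, ← div_eq_mul_inv, div_div]
    refine div_lt_div_of_pos_left (by linarith) hphi ?_
    rw [mul_comm]
    exact neg_phi1_lt hpos hsum hvar hns h1
  have hle : ∀ θ,
      (1 - cos (r * θ)) / (1 - cos θ) * (-phi1'' a)⁻¹ ≤ (cos (r * θ) - 1) / phi1 a θ := by
    intro θ
    have hnn : 0 ≤ (cos (r * θ) - 1) / phi1 a θ :=
      div_nonneg_of_nonpos (by linarith [cos_le_one (r * θ)])
        (by linarith [neg_phi1_nonneg hpos hsum θ])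
    rcases (cos_le_one θ).lt_or_eq with h1 | h1
    · rcases (cos_le_one (r * θ)).lt_or_eq with h2 | h2
      · exact (hlt θ h1 h2).le
      · simp [h2]
    · simpa [h1] using hnn
  have hr0 : 0 < |(r : ℝ)| := abs_pos.2 (by exact_mod_cast hr)
  have hr1 : 1 ≤ |(r : ℝ)| := by exact_mod_cast Int.one_le_abs hr
  have hint : ∫ θ in (-π)..π, (1 - cos (r * θ)) / (1 - cos θ) * (-phi1'' a)⁻¹ <
      ∫ θ in (-π)..π, (cos (r * θ) - 1) / phi1 a θ := by
    refine intervalIntegral.integral_lt_integral_of_ae_le_of_measure_setOfPred_lt_ne_zero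
      (by linarith [pi_pos]) ((intervalIntegrable_one_sub_cos_div r).mul_const _)
      (intervalIntegrable_cos_sub_one_div_phi1 hpos hsum hirr r) (.of_forall hle) ?_
    refine ne_of_gt (lt_of_lt_of_le ?_ (measure_mono (s := Set.Ioo 0 (π / |(r : ℝ)|)) ?_))
    · have hsub : Set.Ioo 0 (π / |(r : ℝ)|) ⊆ Set.Ioc (-π) π := fun θ hθ =>
        ⟨by linarith [hθ.1, pi_pos], hθ.2.le.trans (div_le_self pi_pos.le hr1)⟩
      rw [Measure.restrict_apply measurableSet_Ioo, Set.inter_eq_left.2 hsub, Real.volume_Ioo,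
        sub_zero, ENNReal.ofReal_pos]
      positivity
    · intro θ hθ
      have h1 : θ < π := hθ.2.trans_le (div_le_self pi_pos.le hr1)
      have h2 : |(r : ℝ)| * θ < π := by
        have := hθ.2
        rwa [lt_div_iff₀' hr0] at this
      refine hlt θ (cos_lt_one_of_abs_lt hθ.1.ne' ?_) (cos_lt_one_of_abs_lt ?_ ?_)
      · rw [abs_of_pos hθ.1]
        linarith [pi_pos]
      · exact mul_ne_zero (abs_pos.1 hr0) hθ.1.ne'
      · rw [abs_mul, abs_of_pos hθ.1]
        linarith [pi_pos]
  rw [intervalIntegral.integral_mul_const, integral_one_sub_cos_div] at hint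
  have h := mul_lt_mul_of_pos_left hint (show 0 < -(a 0) / (2 * π) from
    div_pos (by linarith) (by positivity))
  refine lt_of_eq_of_lt ?_ h
  have := pi_pos.ne'
  field_simp

end Symbol

section PositiveCombination

variable {a : ℤ → ℝ}

/-- If `K` is harmonic off the origin and lies above `m |·|`, then this combination of `K`, its
translate and a linear function, which vanishes at `0` and `y`, is positive elsewhere. -/
lemma combination_pos {K : ℤ → ℝ} {m : ℝ} (hpos : ∀ z : ℤ, z ≠ 0 → 0 ≤ a z) (hneg : a 0 < 0)
    (hsymm : ∀ z : ℤ, a (-z) = a z) (hsum : HasSum a 0)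
    (hvar : Summable fun z : ℤ => (z : ℝ) ^ 2 * a z)
    (hirr : AddSubgroup.closure {z : ℤ | 0 < a z} = ⊤) (hns : ∃ z : ℤ, 2 ≤ |z| ∧ 0 < a z)
    (hK0 : K 0 = 0) (hKneg : ∀ r : ℤ, K (-r) = K r) (hKm : ∀ r : ℤ, m * |(r : ℝ)| ≤ K r)
    (hK : ∀ x ≠ 0, HasSum (fun z => a z * K (x + z)) 0) (hm : 0 < m) {k : ℝ} (hk : |k| < 1) {y : ℤ}
    (hky : k * K y = m * y) {x : ℤ} (hx0 : x ≠ 0) (hxy : x ≠ y) :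
    0 < K (y - x) * (1 + k ^ 2) + K x * (1 - k ^ 2) - K y * (1 + k ^ 2) + 2 * k * m * x := by
  have hk2 : k ^ 2 < 1 := (sq_lt_one_iff_abs_lt_one k).2 hk
  set F : ℤ → ℝ := fun x =>
    K (y - x) * (1 + k ^ 2) + K x * (1 - k ^ 2) - K y * (1 + k ^ 2) + 2 * k * m * x with hF
  suffices h : 0 < F x from h
  refine pos_of_harmonic_of_tendsto_atTop hpos hsymm hirr hneg hns (p := 0) (q := y) ?_ ?_ ?_ ?_
    hx0 hxy
  · have hlow : ∀ x : ℤ, 2 * m * (1 - |k|) * |(x : ℝ)| +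
        (-(m * |(y : ℝ)| * (1 + k ^ 2)) - K y * (1 + k ^ 2)) ≤ F x := by
      intro x
      have h1 : m * (|(x : ℝ)| - |(y : ℝ)|) * (1 + k ^ 2) ≤ K (y - x) * (1 + k ^ 2) := by
        refine mul_le_mul_of_nonneg_right (le_trans ?_ (hKm (y - x))) (by positivity)
        refine mul_le_mul_of_nonneg_left ?_ hm.le
        push_cast
        rw [abs_sub_comm]
        exact abs_sub_abs_le_abs_sub _ _
      have h2 : m * |(x : ℝ)| * (1 - k ^ 2) ≤ K x * (1 - k ^ 2) :=
        mul_le_mul_of_nonneg_right (hKm x) (by linarith)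
      have h3 : -(m * (|k| * |(x : ℝ)|)) ≤ m * (k * x) := by
        rw [← mul_neg, ← abs_mul]
        exact mul_le_mul_of_nonneg_left (neg_abs_le _) hm.le
      simp only [hF]
      linarith
    refine tendsto_atTop_mono hlow (tendsto_atTop_add_const_right _ _ ?_)
    refine Tendsto.const_mul_atTop (mul_pos (by positivity) (by linarith)) ?_
    exact tendsto_norm_cocompact_atTop.comp Int.tendsto_coe_cofinite
  · simp [hF, hK0]
  · simp only [hF, sub_self, hK0]
    linear_combination (-2 * k) * hky
  · intro x hx hxy
    have hlin : HasSum (fun z : ℤ => a z * (z : ℝ)) 0 :=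
      hasSum_zero_of_odd (summable_intCast_mul hpos hvar) fun z => by simp [hsymm]
    have h := (((hK (x - y) (sub_ne_zero.2 hxy)).mul_left (1 + k ^ 2)).add
      ((hK x hx).mul_left (1 - k ^ 2))).add ((hlin.mul_left (2 * k * m)).sub
      (hsum.mul_left (K (y - x) * (1 + k ^ 2) + K x * (1 - k ^ 2))))
    simp only [mul_zero, add_zero, sub_zero] at h
    refine h.congr_fun fun z => ?_
    have e : K (y - (x + z)) = K (x - y + z) := by
      rw [← hKneg]
      congr 1
      ring
    simp only [hF, e]
    push_cast
    ring

lemma gam1_pos (hs : 0 < -phi1'' a) : 0 < gam1 a := by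
  rw [gam1, abs_of_neg (by linarith)]
  positivity

/-- Up to a positive factor, `C₁(x,y)` is a combination of `ρ₁` with a linear function, with
coefficients given by the slope `m = a / |φ''(0)|` and `k = m y / ρ₁(y)`. -/
lemma C1Const_eq (hneg : a 0 < 0) (hs : 0 < -phi1'' a) (x y : ℤ) {m k : ℝ}
    (hm : m = -(a 0) / -phi1'' a) (hk : k = m * y / rho1 a y) (hy : rho1 a y ≠ 0) :
    C1Const a x y = (rho1 a (y - x) * (1 + k ^ 2) + rho1 a x * (1 - k ^ 2)
      - rho1 a y * (1 + k ^ 2) + 2 * k * m * x) / (4 * (-(a 0)) * π * gam1 a) := by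
  have hg := gam1_pos hs
  have hg2 : gam1 a ^ 2 * (2 * π * -phi1'' a) = 1 := by
    rw [gam1, abs_of_neg (by linarith), div_pow, sq_sqrt (by positivity)]
    have := pi_pos.ne'
    have := neg_ne_zero.1 hs.ne'
    field_simp
  have hm2 : m = -(a 0) * (gam1 a ^ 2 * (2 * π)) := by
    rw [hm, div_eq_iff hs.ne']
    linear_combination (a 0) * hg2
  subst hk
  rw [C1Const, hm2]
  have := pi_pos.ne'
  have := hneg.ne
  field_simp
  ring

end PositiveCombination

/-- For `d = 1`, if the walk is not simple (some jump of size `≥ 2` has positive rate),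
then `C₁(x,y) > 0` for all `x` and all `y ≠ 0`. -/
theorem C1_pos_not_simple
    (a : ℤ → ℝ)
    (hpos : ∀ z : ℤ, z ≠ 0 → 0 ≤ a z)
    (hneg : a 0 < 0)
    (hsymm : ∀ z : ℤ, a (-z) = a z)
    (hsum : HasSum a 0)
    (hvar : Summable fun z : ℤ => (z : ℝ) ^ 2 * a z)
    (hirr : AddSubgroup.closure {z : ℤ | 0 < a z} = ⊤)
    (hns : ∃ z : ℤ, 2 ≤ |z| ∧ 0 < a z) :
    ∀ x y : ℤ, y ≠ 0 → 0 < C1Const a x y := by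
  intro x y hy
  set m : ℝ := -(a 0) / -phi1'' a with hm
  have hs := neg_phi1''_pos hpos hvar hns
  have hm0 : 0 < m := div_pos (by linarith) hs
  have hK : ∀ r : ℤ, r ≠ 0 → m * |(r : ℝ)| < potentialKernel a r := fun r hr =>
    mul_abs_lt_potentialKernel hpos hneg hsum hvar hirr hns hr
  have hKy := hK y hy
  have hρ : 0 < rho1 a y := by
    rw [rho1_of_ne_zero a hy]
    exact hKy.trans_le' (by positivity)
  set k : ℝ := m * y / rho1 a y with hkdef
  have hky : k * rho1 a y = m * y := div_mul_cancel₀ _ hρ.ne'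
  have hk : |k| < 1 := by
    rw [hkdef, abs_div, abs_mul, abs_of_pos hm0, abs_of_pos hρ, div_lt_one hρ,
      rho1_of_ne_zero a hy]
    exact hKy
  have hk2 : k ^ 2 < 1 := (sq_lt_one_iff_abs_lt_one k).2 hk
  rw [C1Const_eq hneg hs x y hm hkdef hρ.ne']
  refine div_pos ?_ (mul_pos (mul_pos (by linarith) pi_pos) (gam1_pos hs))
  by_cases hx0 : x = 0
  · subst hx0
    simp only [sub_zero, rho1_zero, Int.cast_zero]
    linarith
  by_cases hxy : x = y
  · subst hxy
    rw [sub_self, rho1_zero]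
    have h : 1 * (1 + k ^ 2) + rho1 a x * (1 - k ^ 2) - rho1 a x * (1 + k ^ 2) + 2 * k * m * x =
        1 + k ^ 2 := by linear_combination (-2 * k) * hky
    rw [h]
    positivity
  rw [rho1_of_ne_zero a hy] at hky ⊢
  rw [rho1_of_ne_zero a hx0, rho1_of_ne_zero a (sub_ne_zero.2 (Ne.symm hxy))]
  refine combination_pos hpos hneg hsymm hsum hvar hirr hns (potentialKernel_zero a)
    (potentialKernel_neg a) (fun r => ?_) (fun x hx => ?_) hm0 hk hky hx0 hxy
  · rcases eq_or_ne r 0 with rfl | hr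
    · simp [potentialKernel_zero]
    · exact (hK r hr).le
  · exact hasSum_mul_potentialKernel_add hpos hsymm hsum hvar hirr hx
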